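/- arXiv:1609.03122 — 3 statements merged into one kernel-verified Lean document; each statement's English description precedes it below -/
import Mathlib

section
/- Let Γ₂ = ⟨u, v⟩_ℤ be the sublattice of the Gaussian integers ℤ[i] generated over ℤ by two ℝ-linearly independent Gaussian integers u and v. Then Γ₂ is invariant under multiplication by i (i.e., iΓ₂ = Γ₂) if and only if Im(u·conj(v)) divides each of N(u), N(v), and Re(u·conj(v)). -/
open Complex

/-!
The form `ω(z, w) = Im (z * conj w)` is alternating and `ℝ`-bilinear, so Cramer's rule expands
every `w` as `ω(u, v) w = ω(w, v) u + ω(u, w) v`. For `w = I * u` the two coefficients are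
`Re (u * conj v)` and `-N(u)`, for `w = I * v` they are `N(v)` and `-Re (u * conj v)`. Hence, if
`ω(u, v) ≠ 0`, then `I * u` and `I * v` lie in the lattice exactly when `ω(u, v)` divides these four
numbers. If `ω(u, v) = 0`, divisibility forces `N(u) = N(v) = 0`, so that the span is zero.
Since `I * I = -1`, a submodule mapped into itself by `I` is mapped onto itself.
-/

open scoped ComplexConjugate

theorem map_eq_self_iff_map_le_of_mul_self_eq_neg_one {R M : Type*} [Ring R] [AddCommGroup M]
    [Module R M] {f : Module.End R M} (hf : f * f = -1) (p : Submodule R M) :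
    p.map f = p ↔ p.map f ≤ p := by
  refine ⟨le_of_eq, fun h ↦ le_antisymm h ?_⟩
  calc
    p = p.map (f * f) := by rw [hf, Submodule.map_neg, Module.End.one_eq_id, Submodule.map_id]
    _ = (p.map f).map f := Submodule.map_comp f f p
    _ ≤ p.map f := Submodule.map_mono h

theorem image_mul_left_span_eq_iff_of_mul_self_eq_neg_one {R A : Type*} [CommRing R] [Ring A]
    [Algebra R A] {j : A} (hj : j * j = -1) (s : Set A) :
    (fun z ↦ j * z) '' (Submodule.span R s : Set A) = Submodule.span R s ↔
      ∀ x ∈ s, j * x ∈ Submodule.span R s := by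
  have mulLeft_mul_self : LinearMap.mulLeft R j * LinearMap.mulLeft R j = -1 := by
    ext z
    simp [← mul_assoc, hj]
  change LinearMap.mulLeft R j '' _ = _ ↔ _
  rw [← Submodule.map_coe, SetLike.coe_set_eq,
    map_eq_self_iff_map_le_of_mul_self_eq_neg_one mulLeft_mul_self, Submodule.map_span_le]
  rfl

theorem intCast_mem_span_singleton_intCast_iff_dvd {A : Type*} [Ring A] [CharZero A] {m n : ℤ} :
    (n : A) ∈ Submodule.span ℤ {(m : A)} ↔ m ∣ n := by
  simp only [Submodule.mem_span_singleton, zsmul_eq_mul, dvd_iff_exists_eq_mul_left]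
  exact exists_congr fun a ↦ by rw [eq_comm]; norm_cast

theorem im_mul_conj_eq_neg (u v : ℂ) : (u * conj v).im = -(v * conj u).im := by
  rw [← conj_im, map_mul, conj_conj, mul_comm]

theorem im_mul_conj_smul_eq_add (u v w : ℂ) :
    (u * conj v).im • w = (w * conj v).im • u + (u * conj w).im • v := by
  apply Complex.ext <;> simp <;> ring

theorem im_I_mul_mul_conj (u v : ℂ) : (I * u * conj v).im = (u * conj v).re := by
  rw [mul_assoc, I_mul_im]

theorem im_mul_conj_I_mul (u v : ℂ) : (u * conj (I * v)).im = -(u * conj v).re := by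
  rw [map_mul, conj_I, mul_left_comm, neg_mul, neg_im, I_mul_im]

theorem re_mul_conj_self (u : ℂ) : (u * conj u).re = normSq u := by
  rw [mul_conj, ofReal_re]

section Span

variable {R : Type*} [CommRing R] [Algebra R ℝ] {u v : ℂ}

theorem im_mul_conj_mem_span_of_mem_span_pair {w : ℂ} (hw : w ∈ Submodule.span R {u, v}) :
    (w * conj v).im ∈ Submodule.span R {(u * conj v).im} ∧
      (u * conj w).im ∈ Submodule.span R {(u * conj v).im} := by
  obtain ⟨a, b, rfl⟩ := Submodule.mem_span_pair.mp hw
  simp only [Submodule.mem_span_singleton]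
  constructor
  · exact ⟨a, by simp [add_mul, mul_conj, smul_im, -mul_im]⟩
  · rw [im_mul_conj_eq_neg u v, im_mul_conj_eq_neg u (_ + _)]
    exact ⟨b, by simp [add_mul, mul_conj, smul_im, -mul_im]⟩

theorem mem_span_pair_of_im_mul_conj_mem_span (huv : (u * conj v).im ≠ 0) {w : ℂ}
    (hwv : (w * conj v).im ∈ Submodule.span R {(u * conj v).im})
    (huw : (u * conj w).im ∈ Submodule.span R {(u * conj v).im}) :
    w ∈ Submodule.span R {u, v} := by
  obtain ⟨a, ha⟩ := Submodule.mem_span_singleton.mp hwv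
  obtain ⟨b, hb⟩ := Submodule.mem_span_singleton.mp huw
  refine Submodule.mem_span_pair.mpr ⟨a, b, smul_right_injective ℂ huv ?_⟩
  change (u * conj v).im • (a • u + b • v) = (u * conj v).im • w
  rw [im_mul_conj_smul_eq_add u v w, ← ha, ← hb, smul_add, smul_assoc, smul_assoc,
    smul_comm _ a, smul_comm _ b]

end Span

theorem mul_I_invariant_iff_general {R : Type*} [CommRing R] [Algebra R ℝ] (u v : ℂ) :
    (fun z ↦ I * z) '' (Submodule.span R {u, v} : Set ℂ) = Submodule.span R {u, v} ↔
      normSq u ∈ Submodule.span R {(u * conj v).im} ∧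
      normSq v ∈ Submodule.span R {(u * conj v).im} ∧
      (u * conj v).re ∈ Submodule.span R {(u * conj v).im} := by
  rw [image_mul_left_span_eq_iff_of_mul_self_eq_neg_one I_mul_I]
  simp only [Set.forall_mem_insert, Set.mem_singleton_iff, forall_eq]
  constructor
  · rintro ⟨hu, hv⟩
    obtain ⟨hre, hnormSq_u⟩ := im_mul_conj_mem_span_of_mem_span_pair hu
    obtain ⟨hnormSq_v, -⟩ := im_mul_conj_mem_span_of_mem_span_pair hv
    rw [im_I_mul_mul_conj] at hre hnormSq_v
    rw [im_mul_conj_I_mul, neg_mem_iff] at hnormSq_u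
    rw [re_mul_conj_self] at hnormSq_u hnormSq_v
    exact ⟨hnormSq_u, hnormSq_v, hre⟩
  · rintro ⟨hnormSq_u, hnormSq_v, hre⟩
    by_cases huv : (u * conj v).im = 0
    · rw [huv, Submodule.span_zero_singleton, Submodule.mem_bot, normSq_eq_zero]
        at hnormSq_u hnormSq_v
      simp [hnormSq_u, hnormSq_v]
    · constructor <;> apply mem_span_pair_of_im_mul_conj_mem_span huv
      · rwa [im_I_mul_mul_conj]
      · rwa [im_mul_conj_I_mul, neg_mem_iff, re_mul_conj_self]
      · rwa [im_I_mul_mul_conj, re_mul_conj_self]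
      · rwa [im_mul_conj_I_mul, neg_mem_iff]

/-- Let `Γ₂ = ⟨u, v⟩_ℤ` be the sublattice of the Gaussian integers `ℤ[i] ⊆ ℂ` generated
by two `ℝ`-linearly independent Gaussian integers `u` and `v`.  Then `iΓ₂ = Γ₂` if and
only if `Im(u·conj v)` divides each of `N(u)`, `N(v)` and `Re(u·conj v)`. -/
theorem mul_I_invariant_iff (u v : ℂ) (u₁ u₂ v₁ v₂ : ℤ)
    (hu : u = u₁ + u₂ * I) (hv : v = v₁ + v₂ * I)
    (hind : LinearIndependent ℝ ![u, v])
    (Γ₂ : Set ℂ) (hΓ₂ : Γ₂ = {z | ∃ a b : ℤ, z = a * u + b * v})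
    (ruv iuv nu nv : ℤ)
    (hruv : u * starRingEnd ℂ v = ruv + iuv * I)
    (hnu : u * starRingEnd ℂ u = (nu : ℂ))
    (hnv : v * starRingEnd ℂ v = (nv : ℂ)) :
    (fun z => I * z) '' Γ₂ = Γ₂ ↔ (iuv ∣ nu ∧ iuv ∣ nv ∧ iuv ∣ ruv) := by
  have Γ₂_eq_span : Γ₂ = Submodule.span ℤ {u, v} := by
    ext z
    simp [hΓ₂, Submodule.mem_span_pair, eq_comm]
  rw [Γ₂_eq_span, mul_I_invariant_iff_general, ← re_mul_conj_self, ← re_mul_conj_self]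
  simp only [hruv, hnu, hnv, add_re, add_im, mul_I_re, mul_I_im, intCast_re, intCast_im, neg_zero,
    add_zero, zero_add, intCast_mem_span_singleton_intCast_iff_dvd]
end

section
/- Let Γ₂ = ⟨u, v⟩_ℤ be the sublattice of the Gaussian integers ℤ[i] generated over ℤ by two ℝ-linearly independent Gaussian integers u and v. Then Γ₂ is invariant under complex conjugation (i.e., conj(Γ₂) = Γ₂) if and only if Im(u·conj(v)) divides each of Im(u²), Im(v²), and Im(uv). -/
/-!
The coordinates of `w` in a real basis `u, v` of `ℂ` are given by Cramer's rule with the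
alternating form `(x, y) ↦ Im (x * conj y)`, so `w` lies in the lattice spanned by `u` and `v` iff
`Im (w * conj v)` and `Im (u * conj w)` are integral multiples of `Im (u * conj v)`. As conjugation
is an involution, the lattice is invariant iff it contains `conj u` and `conj v`, and for these two
vectors the numerators are, up to sign, `Im (u * v)`, `Im (u ^ 2)` and `Im (v ^ 2)`.
-/

open Complex

open scoped ComplexConjugate

section Span

variable {R M : Type*} [Semiring R] [AddCommMonoid M] [Module R M]

theorem image_span_eq_self_iff_mapsTo_of_involutive {f : M →ₗ[R] M}
    (hf : Function.Involutive f) {s : Set M} :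
    f '' Submodule.span R s = Submodule.span R s ↔ Set.MapsTo f s (Submodule.span R s) := by
  refine ⟨fun h x hx ↦ h ▸ Set.mem_image_of_mem f (Submodule.subset_span hx), fun h ↦ ?_⟩
  have hmaps : Set.MapsTo f (Submodule.span R s) (Submodule.span R s) :=
    Submodule.span_le (p := (Submodule.span R s).comap f).mpr h
  exact hmaps.image_subset.antisymm fun x hx ↦ ⟨f x, hmaps hx, hf x⟩

end Span

theorem intCast_mem_span_int_singleton {R : Type*} [NonAssocRing R] [CharZero R] {m n : ℤ} :
    (m : R) ∈ Submodule.span ℤ {(n : R)} ↔ n ∣ m := by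
  simp only [Submodule.mem_span_singleton, zsmul_eq_mul, dvd_def, mul_comm n, eq_comm (a := m)]
  norm_cast

theorem im_mul_conj_ne_zero_of_linearIndependent {u v : ℂ} (h : LinearIndependent ℝ ![u, v]) :
    (u * conj v).im ≠ 0 := by
  intro huv
  have hIv : (I * v * conj v).im = 0 := by
    have hcramer := im_mul_conj_smul_eq_add u v (I * v)
    rw [huv, zero_smul] at hcramer
    exact (LinearIndependent.pair_iff.mp h _ _ hcramer.symm).1
  have hv : v ≠ 0 := h.ne_zero 1
  simp [mul_assoc, mul_conj, hv] at hIv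

section Lattice

variable {R : Type*} [CommRing R] [Algebra R ℝ] {u v : ℂ}

theorem mem_span_pair_iff_im_mul_conj (h : LinearIndependent ℝ ![u, v]) {w : ℂ} :
    w ∈ Submodule.span R {u, v} ↔
      (w * conj v).im ∈ Submodule.span R {(u * conj v).im} ∧
        (u * conj w).im ∈ Submodule.span R {(u * conj v).im} := by
  simp only [Submodule.mem_span_singleton, Submodule.mem_span_pair]
  constructor
  · rintro ⟨a, b, rfl⟩
    -- `Algebra.smul_def` only acts after `smul_re`, lest it turn `a` and `b` into complex numbers.
    refine ⟨⟨a, ?_⟩, ⟨b, ?_⟩⟩ <;>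
      simp only [mul_im, add_re, add_im, conj_re, conj_im, smul_re, smul_im] <;>
      simp only [Algebra.smul_def] <;>
      ring
  · rintro ⟨⟨a, ha⟩, ⟨b, hb⟩⟩
    refine ⟨a, b, smul_right_injective ℂ (im_mul_conj_ne_zero_of_linearIndependent h) ?_⟩
    calc (u * conj v).im • (a • u + b • v)
        = (a • (u * conj v).im) • u + (b • (u * conj v).im) • v := by
          rw [smul_add, smul_comm _ a, smul_comm _ b, smul_assoc, smul_assoc]
      _ = (w * conj v).im • u + (u * conj w).im • v := by rw [ha, hb]
      _ = (u * conj v).im • w := (im_mul_conj_smul_eq_add u v w).symm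

theorem conj_invariant_iff_general (h : LinearIndependent ℝ ![u, v]) :
    conj '' (Submodule.span R {u, v} : Set ℂ) = Submodule.span R {u, v} ↔
      (u ^ 2).im ∈ Submodule.span R {(u * conj v).im} ∧
        (v ^ 2).im ∈ Submodule.span R {(u * conj v).im} ∧
          (u * v).im ∈ Submodule.span R {(u * conj v).im} := by
  have hinv : Function.Involutive (conjAe.toLinearMap.restrictScalars R) := conj_conj
  have hmaps : conj '' (Submodule.span R {u, v} : Set ℂ) = Submodule.span R {u, v} ↔
      conj u ∈ Submodule.span R {u, v} ∧ conj v ∈ Submodule.span R {u, v} :=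
    (image_span_eq_self_iff_mapsTo_of_involutive hinv).trans (by simp [Set.MapsTo])
  rw [hmaps, mem_span_pair_iff_im_mul_conj h, mem_span_pair_iff_im_mul_conj h]
  simp only [conj_conj, sq, ← map_mul, conj_im, neg_mem_iff]
  tauto

end Lattice

/-- Let `Γ₂ = ⟨u, v⟩_ℤ` be the sublattice of the Gaussian integers `ℤ[i] ⊆ ℂ` generated
by two `ℝ`-linearly independent Gaussian integers `u` and `v`.  Then `conj Γ₂ = Γ₂` if
and only if `Im(u·conj v)` divides each of `Im(u²)`, `Im(v²)` and `Im(uv)`. -/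
theorem conj_invariant_iff (u v : ℂ) (u₁ u₂ v₁ v₂ : ℤ)
    (hu : u = u₁ + u₂ * I) (hv : v = v₁ + v₂ * I)
    (hind : LinearIndependent ℝ ![u, v])
    (Γ₂ : Set ℂ) (hΓ₂ : Γ₂ = {z | ∃ a b : ℤ, z = a * u + b * v})
    (ruv iuv ru2 iu2 rv2 iv2 rmuv imuv : ℤ)
    (hruv : u * starRingEnd ℂ v = ruv + iuv * I)
    (hu2 : u ^ 2 = ru2 + iu2 * I)
    (hv2 : v ^ 2 = rv2 + iv2 * I)
    (hmuv : u * v = rmuv + imuv * I) :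
    (fun z => starRingEnd ℂ z) '' Γ₂ = Γ₂ ↔ (iuv ∣ iu2 ∧ iuv ∣ iv2 ∧ iuv ∣ imuv) := by
  have hspan : Γ₂ = Submodule.span ℤ {u, v} := by
    ext z; simp [hΓ₂, Submodule.mem_span_pair, eq_comm]
  simpa [hspan, hruv, hu2, hv2, hmuv, intCast_mem_span_int_singleton] using
    conj_invariant_iff_general (R := ℤ) hind
end

section
/- Let Γ₁ = ℤ[i] and Γ₂ = ⟨u, v⟩_ℤ for ℝ-linearly independent u, v ∈ ℤ[i]. If Im(u·conj(v)) divides each of N(u), N(v), Re(u·conj(v)), Re(u²), Im(u²), Re(v²), Im(v²), Re(uv), and Im(uv), then the point group of the color group H of the coloring of Γ₁ determined by Γ₂ is the full point group of ℤ[i], namely the dihedral group of order 8 generated by multiplication by i and complex conjugation (so the color group is of type p4m and the coloring is perfect). -/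
open Complex

/-- A symmetry `h` of the plane (identified with `ℂ`) is a *color symmetry* of the
coloring of `Γ₁` determined by its subgroup `Γ₂` (each coset of `Γ₂` is one color) if
there is a permutation `σ` of the colors with `c (h ℓ) = σ (c ℓ)` for all `ℓ ∈ Γ₁`. -/
def IsColorSymmetry (Γ₁ Γ₂ : AddSubgroup ℂ) (h : ℂ → ℂ) : Prop :=
  ∃ σ : Equiv.Perm (ℂ ⧸ Γ₂), ∀ ℓ ∈ Γ₁,
    (QuotientAddGroup.mk (h ℓ) : ℂ ⧸ Γ₂) = σ (QuotientAddGroup.mk ℓ)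

/-- The point group `P(H)` of the color group `H` of the coloring of `Γ₁` determined by
`Γ₂`: all isometries of the plane fixing the origin, mapping `Γ₁` onto itself, and
permuting the colors. -/
def pointColorGroup (Γ₁ Γ₂ : AddSubgroup ℂ) : Set (ℂ → ℂ) :=
  {g | Isometry g ∧ Function.Surjective g ∧ g 0 = 0 ∧
    g '' (Γ₁ : Set ℂ) = Γ₁ ∧ IsColorSymmetry Γ₁ Γ₂ g}

/-!
An isometry fixing the origin is linear, so `P(H)` lies in the point group of `ℤ[i]`, and it
contains every `f` in that group with `f Γ₂ = Γ₂`. The point group of `ℤ[i]` is generated by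
multiplication by `I` and conjugation, so it is enough that these two map `u` and `v` into
`Γ₂ = ⟨u, v⟩_ℤ`. By Cramer's rule the coordinates of `w` in the basis `u, v` are `Im (w * conj v)`
and `Im (u * conj w)` divided by `Δ = Im (u * conj v)`. For `w` among `I * u`, `I * v`, `conj u`,
`conj v` these numerators are, up to sign, the quantities that are assumed to be multiples of `Δ`.
-/

open AddSubgroup (zmultiples)
open ComplexConjugate

section LatticePointGroup

variable {E : Type*} [NormedAddCommGroup E] [NormedSpace ℝ E]

/-- The point group of `Γ`: the linear isometries of the ambient space that map `Γ` onto itself. -/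
def latticePointGroup (Γ : AddSubgroup E) : Subgroup (E ≃ₗᵢ[ℝ] E) where
  carrier := {f | f '' (Γ : Set E) = Γ}
  one_mem' := Set.image_id _
  mul_mem' {f g} (hf : f '' _ = _) (hg : g '' _ = _) := by
    rw [Set.mem_ofPred_eq, LinearIsometryEquiv.coe_mul, Set.image_comp, hg, hf]
  inv_mem' {f} (hf : f '' _ = _) := by
    rw [Set.mem_ofPred_eq, LinearIsometryEquiv.coe_inv, f.symm.image_eq_preimage_symm,
      f.symm_symm, Set.preimage_eq_iff_eq_image f.bijective, hf]

theorem mem_latticePointGroup {f : E ≃ₗᵢ[ℝ] E} {Γ : AddSubgroup E} :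
    f ∈ latticePointGroup Γ ↔ f '' (Γ : Set E) = Γ :=
  Iff.rfl

theorem apply_mem_of_mem_latticePointGroup {f : E ≃ₗᵢ[ℝ] E} {Γ : AddSubgroup E}
    (hf : f ∈ latticePointGroup Γ) {z : E} (hz : z ∈ Γ) : f z ∈ Γ :=
  (mem_latticePointGroup.1 hf).subset (Set.mem_image_of_mem f hz)

theorem latticePointGroup_bot : latticePointGroup (⊥ : AddSubgroup E) = ⊤ := by
  ext f
  simp [mem_latticePointGroup]

theorem mem_latticePointGroup_of_isOfFinOrder {f : E ≃ₗᵢ[ℝ] E} (hf : IsOfFinOrder f)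
    {Γ : AddSubgroup E} (h : Set.MapsTo f Γ Γ) : f ∈ latticePointGroup Γ := by
  obtain ⟨n, hn, hfn⟩ := isOfFinOrder_iff_pow_eq_one.1 hf
  refine h.image_subset.antisymm fun z hz => ⟨f^[n - 1] z, h.iterate _ hz, ?_⟩
  have hiter : f^[n] = ⇑(f ^ n) := (hom_coe_pow _ rfl (fun _ _ => rfl) f n).symm
  rw [← Function.iterate_succ_apply' f, Nat.succ_eq_add_one, Nat.sub_add_cancel hn, hiter, hfn,
    LinearIsometryEquiv.coe_one, id]

theorem mem_latticePointGroup_closure_of_isOfFinOrder {f : E ≃ₗᵢ[ℝ] E} (hf : IsOfFinOrder f)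
    {s : Set E} (h : ∀ z ∈ s, f z ∈ AddSubgroup.closure s) :
    f ∈ latticePointGroup (AddSubgroup.closure s) :=
  mem_latticePointGroup_of_isOfFinOrder hf <|
    (AddSubgroup.closure_le ((AddSubgroup.closure s).comap (f : E →+ E))).2 h

end LatticePointGroup

theorem exists_linearIsometryEquiv_coe_eq {E F : Type*} [NormedAddCommGroup E] [NormedSpace ℝ E]
    [NormedAddCommGroup F] [NormedSpace ℝ F] {g : E → F} (hg : Isometry g)
    (hsurj : Function.Surjective g) (h0 : g 0 = 0) : ∃ f : E ≃ₗᵢ[ℝ] F, ⇑f = g :=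
  ⟨(IsometryEquiv.mk' g _ (Function.surjInv_eq hsurj) hg).toRealLinearIsometryEquivOfMapZero h0,
    rfl⟩

theorem isColorSymmetry_of_mem_latticePointGroup (Γ₁ : AddSubgroup ℂ) {Γ₂ : AddSubgroup ℂ}
    {f : ℂ ≃ₗᵢ[ℝ] ℂ} (hf : f ∈ latticePointGroup Γ₂) : IsColorSymmetry Γ₁ Γ₂ f :=
  ⟨(QuotientAddGroup.congr Γ₂ Γ₂ f.toLinearEquiv.toAddEquiv (SetLike.coe_injective hf)).toEquiv,
    fun _ _ => rfl⟩

theorem mem_pointColorGroup_iff {Γ₁ Γ₂ : AddSubgroup ℂ} {g : ℂ → ℂ} :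
    g ∈ pointColorGroup Γ₁ Γ₂ ↔
      ∃ f ∈ latticePointGroup Γ₁, IsColorSymmetry Γ₁ Γ₂ f ∧ ⇑f = g := by
  constructor
  · rintro ⟨hg, hsurj, h0, hΓ₁, hcolor⟩
    obtain ⟨f, rfl⟩ := exists_linearIsometryEquiv_coe_eq hg hsurj h0
    exact ⟨f, hΓ₁, hcolor, rfl⟩
  · rintro ⟨f, hf, hcolor, rfl⟩
    exact ⟨f.isometry, f.surjective, map_zero f, hf, hcolor⟩

theorem pointColorGroup_eq_image_of_le {Γ₁ Γ₂ : AddSubgroup ℂ}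
    (h : latticePointGroup Γ₁ ≤ latticePointGroup Γ₂) :
    pointColorGroup Γ₁ Γ₂ = (fun f : ℂ ≃ₗᵢ[ℝ] ℂ => ⇑f) '' latticePointGroup Γ₁ := by
  ext g
  rw [mem_pointColorGroup_iff]
  exact ⟨fun ⟨f, hf, _, hfg⟩ => ⟨f, hf, hfg⟩, fun ⟨f, hf, hfg⟩ =>
    ⟨f, hf, isColorSymmetry_of_mem_latticePointGroup Γ₁ (h hf), hfg⟩⟩

/-- The square lattice `ℤ[i]`, as an additive subgroup of `ℂ`. -/
def gaussianLattice : AddSubgroup ℂ :=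
  AddSubgroup.closure {1, I}

/-- Multiplication by `I`, the rotation by a right angle generating the rotations of `ℤ[i]`. -/
noncomputable def quarterTurn : ℂ ≃ₗᵢ[ℝ] ℂ :=
  rotation ⟨I, mem_sphere_zero_iff_norm.2 norm_I⟩

theorem quarterTurn_apply (z : ℂ) : quarterTurn z = I * z :=
  rfl

theorem quarterTurn_pow_apply (k : ℕ) (z : ℂ) : (quarterTurn ^ k) z = I ^ k * z := by
  induction k with
  | zero => simp
  | succ k ih =>
    rw [pow_succ', LinearIsometryEquiv.coe_mul, Function.comp_apply, ih, quarterTurn_apply,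
      pow_succ', mul_assoc]

theorem isOfFinOrder_quarterTurn : IsOfFinOrder quarterTurn :=
  isOfFinOrder_iff_pow_eq_one.2
    ⟨4, by norm_num, LinearIsometryEquiv.ext fun z => by simp [quarterTurn_pow_apply]⟩

theorem isOfFinOrder_conjLIE : IsOfFinOrder conjLIE :=
  isOfFinOrder_iff_pow_eq_one.2
    ⟨2, by norm_num, LinearIsometryEquiv.ext fun z => by simp [sq]⟩

theorem one_mem_gaussianLattice : (1 : ℂ) ∈ gaussianLattice :=
  AddSubgroup.subset_closure (by simp)

theorem I_mem_gaussianLattice : I ∈ gaussianLattice :=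
  AddSubgroup.subset_closure (by simp)

theorem quarterTurn_mem_latticePointGroup_gaussianLattice :
    quarterTurn ∈ latticePointGroup gaussianLattice := by
  refine mem_latticePointGroup_closure_of_isOfFinOrder isOfFinOrder_quarterTurn ?_
  rintro z (rfl | rfl)
  · rw [quarterTurn_apply, mul_one]
    exact I_mem_gaussianLattice
  · rw [quarterTurn_apply, I_mul_I]
    exact neg_mem one_mem_gaussianLattice

theorem conjLIE_mem_latticePointGroup_gaussianLattice :
    conjLIE ∈ latticePointGroup gaussianLattice := by
  refine mem_latticePointGroup_closure_of_isOfFinOrder isOfFinOrder_conjLIE ?_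
  rintro z (rfl | rfl)
  · rw [conjLIE_apply, map_one]
    exact one_mem_gaussianLattice
  · rw [conjLIE_apply, conj_I]
    exact neg_mem I_mem_gaussianLattice

theorem exists_eq_I_pow_of_norm_eq_one {a : ℂ} (ha : a ∈ gaussianLattice) (hnorm : ‖a‖ = 1) :
    ∃ k : Fin 4, a = I ^ (k : ℕ) := by
  obtain ⟨m, n, rfl⟩ := AddSubgroup.mem_closure_pair.1 ha
  have hsq : m * m + n * n = 1 := by
    have h := normSq_eq_norm_sq (m • (1 : ℂ) + n • I)
    rw [hnorm, normSq_apply] at h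
    exact_mod_cast (by simpa using h : (m : ℝ) * m + n * n = 1)
  obtain ⟨hm, hm'⟩ : -1 ≤ m ∧ m ≤ 1 := ⟨by nlinarith, by nlinarith⟩
  obtain ⟨hn, hn'⟩ : -1 ≤ n ∧ n ≤ 1 := ⟨by nlinarith, by nlinarith⟩
  interval_cases m <;> interval_cases n <;> try omega
  · exact ⟨2, by simp⟩
  · exact ⟨3, by simp [pow_succ]⟩
  · exact ⟨1, by simp⟩
  · exact ⟨0, by simp⟩

theorem mem_latticePointGroup_gaussianLattice_iff {f : ℂ ≃ₗᵢ[ℝ] ℂ} :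
    f ∈ latticePointGroup gaussianLattice ↔
      ∃ k : Fin 4, f = quarterTurn ^ (k : ℕ) ∨ f = quarterTurn ^ (k : ℕ) * conjLIE := by
  constructor
  · intro hf
    have hf1 : f 1 ∈ gaussianLattice :=
      apply_mem_of_mem_latticePointGroup hf one_mem_gaussianLattice
    obtain ⟨k, hk⟩ := exists_eq_I_pow_of_norm_eq_one hf1 (by simp)
    obtain ⟨a, rfl | rfl⟩ := linear_isometry_complex f
    · have ha : (a : ℂ) = I ^ (k : ℕ) := by simpa using hk
      exact ⟨k, .inl <| LinearIsometryEquiv.ext fun z => by simp [quarterTurn_pow_apply, ha]⟩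
    · have ha : (a : ℂ) = I ^ (k : ℕ) := by simpa using hk
      exact ⟨k, .inr <| LinearIsometryEquiv.ext fun z => by simp [quarterTurn_pow_apply, ha]⟩
  · have hpow (k : ℕ) := pow_mem quarterTurn_mem_latticePointGroup_gaussianLattice k
    rintro ⟨k, rfl | rfl⟩
    · exact hpow k
    · exact mul_mem (hpow k) conjLIE_mem_latticePointGroup_gaussianLattice

theorem coe_image_latticePointGroup_gaussianLattice :
    (fun f : ℂ ≃ₗᵢ[ℝ] ℂ => ⇑f) '' latticePointGroup gaussianLattice =
      {g | ∃ k : Fin 4, g = (fun z => I ^ (k : ℕ) * z) ∨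
        g = (fun z => I ^ (k : ℕ) * conj z)} := by
  have hrot (k : ℕ) : ⇑(quarterTurn ^ k) = fun z => I ^ k * z :=
    funext (quarterTurn_pow_apply k)
  have hrefl (k : ℕ) : ⇑(quarterTurn ^ k * conjLIE) = fun z => I ^ k * conj z :=
    funext fun z => quarterTurn_pow_apply k (conj z)
  ext g
  constructor
  · rintro ⟨f, hf, rfl⟩
    obtain ⟨k, rfl | rfl⟩ := mem_latticePointGroup_gaussianLattice_iff.1 hf
    · exact ⟨k, .inl (hrot k)⟩
    · exact ⟨k, .inr (hrefl k)⟩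
  · rintro ⟨k, rfl | rfl⟩
    · exact ⟨_, mem_latticePointGroup_gaussianLattice_iff.2 ⟨k, .inl rfl⟩, hrot k⟩
    · exact ⟨_, mem_latticePointGroup_gaussianLattice_iff.2 ⟨k, .inr rfl⟩, hrefl k⟩

theorem latticePointGroup_gaussianLattice_le {Γ : AddSubgroup ℂ}
    (hI : quarterTurn ∈ latticePointGroup Γ) (hconj : conjLIE ∈ latticePointGroup Γ) :
    latticePointGroup gaussianLattice ≤ latticePointGroup Γ := by
  intro f hf
  obtain ⟨k, rfl | rfl⟩ := mem_latticePointGroup_gaussianLattice_iff.1 hf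
  · exact pow_mem hI k
  · exact mul_mem (pow_mem hI k) hconj

section PlaneLattice

theorem im_mul_conj_mul_eq (u v w : ℂ) :
    ((u * conj v).im : ℂ) * w = (w * conj v).im * u + (u * conj w).im * v := by
  apply Complex.ext <;> simp <;> ring

variable {u v : ℂ}

theorem mem_closure_pair_of_im_mem_zmultiples (hΔ : (u * conj v).im ≠ 0) {w : ℂ}
    (hu : (w * conj v).im ∈ zmultiples (u * conj v).im)
    (hv : (u * conj w).im ∈ zmultiples (u * conj v).im) :
    w ∈ AddSubgroup.closure {u, v} := by
  obtain ⟨m, hm⟩ := AddSubgroup.mem_zmultiples_iff.1 hu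
  obtain ⟨n, hn⟩ := AddSubgroup.mem_zmultiples_iff.1 hv
  refine AddSubgroup.mem_closure_pair.2 ⟨m, n, mul_left_cancel₀ (ofReal_ne_zero.2 hΔ) ?_⟩
  rw [im_mul_conj_mul_eq u v w, ← hm, ← hn]
  simp only [zsmul_eq_mul, ofReal_mul, ofReal_intCast]
  ring

theorem quarterTurn_mem_latticePointGroup_closure_pair (hΔ : (u * conj v).im ≠ 0)
    (hu : normSq u ∈ zmultiples (u * conj v).im) (hv : normSq v ∈ zmultiples (u * conj v).im)
    (huv : (u * conj v).re ∈ zmultiples (u * conj v).im) :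
    quarterTurn ∈ latticePointGroup (AddSubgroup.closure {u, v}) := by
  have im_I_mul (a b : ℂ) : (I * a * conj b).im = (a * conj b).re := by rw [mul_assoc, I_mul_im]
  have im_conj_I_mul (a b : ℂ) : (a * conj (I * b)).im = -(a * conj b).re := by
    rw [map_mul, conj_I, mul_left_comm, neg_mul, neg_im, I_mul_im]
  refine mem_latticePointGroup_closure_of_isOfFinOrder isOfFinOrder_quarterTurn ?_
  rintro z (rfl | rfl) <;> rw [quarterTurn_apply] <;>
    apply mem_closure_pair_of_im_mem_zmultiples hΔ
  · rwa [im_I_mul]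
  · rwa [im_conj_I_mul, mul_conj, ofReal_re, neg_mem_iff]
  · rwa [im_I_mul, mul_conj, ofReal_re]
  · rwa [im_conj_I_mul, neg_mem_iff]

theorem conjLIE_mem_latticePointGroup_closure_pair (hΔ : (u * conj v).im ≠ 0)
    (hu : (u ^ 2).im ∈ zmultiples (u * conj v).im) (hv : (v ^ 2).im ∈ zmultiples (u * conj v).im)
    (huv : (u * v).im ∈ zmultiples (u * conj v).im) :
    conjLIE ∈ latticePointGroup (AddSubgroup.closure {u, v}) := by
  refine mem_latticePointGroup_closure_of_isOfFinOrder isOfFinOrder_conjLIE ?_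
  rintro z (rfl | rfl) <;> rw [conjLIE_apply] <;>
    apply mem_closure_pair_of_im_mem_zmultiples hΔ
  · rwa [← map_mul, conj_im, neg_mem_iff]
  · rwa [conj_conj, ← sq]
  · rwa [← map_mul, ← sq, conj_im, neg_mem_iff]
  · rwa [conj_conj]

end PlaneLattice

section Divisibility

variable {w z : ℂ} {a b c d : ℤ}

theorem intCast_mem_zmultiples_im (hw : w = a + b * I) (hd : b ∣ d) :
    (d : ℝ) ∈ zmultiples w.im := by
  obtain ⟨k, rfl⟩ := hd
  exact ⟨k, by simp [hw, mul_comm]⟩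

theorem re_mem_zmultiples_im (hw : w = a + b * I) (hz : z = c + d * I) (hc : b ∣ c) :
    z.re ∈ zmultiples w.im := by
  simpa [hz] using intCast_mem_zmultiples_im hw hc

theorem im_mem_zmultiples_im (hw : w = a + b * I) (hz : z = c + d * I) (hd : b ∣ d) :
    z.im ∈ zmultiples w.im := by
  simpa [hz] using intCast_mem_zmultiples_im hw hd

theorem normSq_mem_zmultiples_im (hw : w = a + b * I) (hz : z * conj z = d) (hd : b ∣ d) :
    normSq z ∈ zmultiples w.im := by
  have hnormSq : normSq z = d := by exact_mod_cast (mul_conj z).symm.trans hz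
  exact hnormSq ▸ intCast_mem_zmultiples_im hw hd

end Divisibility

theorem pointColorGroup_p4m_general {u v : ℂ}
    (hnu : normSq u ∈ zmultiples (u * conj v).im)
    (hnv : normSq v ∈ zmultiples (u * conj v).im)
    (hruv : (u * conj v).re ∈ zmultiples (u * conj v).im)
    (hu2 : (u ^ 2).im ∈ zmultiples (u * conj v).im)
    (hv2 : (v ^ 2).im ∈ zmultiples (u * conj v).im)
    (hmuv : (u * v).im ∈ zmultiples (u * conj v).im) :
    pointColorGroup (AddSubgroup.closure {1, I}) (AddSubgroup.closure {u, v}) =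
      {g | ∃ k : Fin 4, g = (fun z => I ^ (k : ℕ) * z) ∨
        g = (fun z => I ^ (k : ℕ) * conj z)} := by
  rw [← coe_image_latticePointGroup_gaussianLattice]
  apply pointColorGroup_eq_image_of_le
  by_cases hΔ : (u * conj v).im = 0
  · obtain rfl : u = 0 := by simpa [hΔ] using hnu
    obtain rfl : v = 0 := by simpa using hnv
    rw [Set.pair_eq_singleton, AddSubgroup.closure_singleton_zero, latticePointGroup_bot]
    exact le_top
  · exact latticePointGroup_gaussianLattice_le
      (quarterTurn_mem_latticePointGroup_closure_pair hΔ hnu hnv hruv)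
      (conjLIE_mem_latticePointGroup_closure_pair hΔ hu2 hv2 hmuv)

/-- Case (a) of the theorem for the square lattice `Γ₁ = ℤ[i]`: if `Im(u·conj v)`
divides all of `N(u)`, `N(v)`, `Re(u·conj v)`, `Re(u²)`, `Im(u²)`, `Re(v²)`, `Im(v²)`,
`Re(uv)`, `Im(uv)`, then the point group of the color group of the coloring of `Γ₁`
determined by `Γ₂ = ⟨u, v⟩_ℤ` is the full dihedral point group of order `8` generated
by multiplication by `i` and complex conjugation (type `p4m`; the coloring is
perfect). -/
theorem pointColorGroup_p4m (u v : ℂ) (u₁ u₂ v₁ v₂ : ℤ)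
    (hu : u = u₁ + u₂ * I) (hv : v = v₁ + v₂ * I)
    (hind : LinearIndependent ℝ ![u, v])
    (Γ₁ Γ₂ : AddSubgroup ℂ)
    (hΓ₁ : Γ₁ = AddSubgroup.closure ({1, I} : Set ℂ))
    (hΓ₂ : Γ₂ = AddSubgroup.closure ({u, v} : Set ℂ))
    (ruv iuv nu nv ru2 iu2 rv2 iv2 rmuv imuv : ℤ)
    (hruv : u * starRingEnd ℂ v = ruv + iuv * I)
    (hnu : u * starRingEnd ℂ u = (nu : ℂ))
    (hnv : v * starRingEnd ℂ v = (nv : ℂ))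
    (hu2 : u ^ 2 = ru2 + iu2 * I)
    (hv2 : v ^ 2 = rv2 + iv2 * I)
    (hmuv : u * v = rmuv + imuv * I)
    (hdvd : iuv ∣ nu ∧ iuv ∣ nv ∧ iuv ∣ ruv ∧ iuv ∣ ru2 ∧ iuv ∣ iu2 ∧
      iuv ∣ rv2 ∧ iuv ∣ iv2 ∧ iuv ∣ rmuv ∧ iuv ∣ imuv) :
    pointColorGroup Γ₁ Γ₂ =
      {g | ∃ k : Fin 4, g = (fun z => I ^ (k : ℕ) * z) ∨
        g = (fun z => I ^ (k : ℕ) * starRingEnd ℂ z)} := by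
  subst hΓ₁ hΓ₂
  obtain ⟨dnu, dnv, druv, -, du2, -, dv2, -, dmuv⟩ := hdvd
  exact pointColorGroup_p4m_general
    (normSq_mem_zmultiples_im hruv hnu dnu) (normSq_mem_zmultiples_im hruv hnv dnv)
    (re_mem_zmultiples_im hruv hruv druv) (im_mem_zmultiples_im hruv hu2 du2)
    (im_mem_zmultiples_im hruv hv2 dv2) (im_mem_zmultiples_im hruv hmuv dmuv)
end
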